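/- arXiv:1303.0811 — 9 statements merged into one kernel-verified Lean document; each statement's English description precedes it below -/
import Mathlib

section
/- Let V be a real inner product space and let Φ be a root system in V. Let α, β ∈ Φ, and let k₁, k₂ be integers such that β + k₁·α ∈ Φ and k ≤ k₁ for every integer k with β + k·α ∈ Φ, and β − k₂·α ∈ Φ and k ≤ k₂ for every integer k with β − k·α ∈ Φ. Then 2⟪β,α⟫/⟪α,α⟫ = k₂ − k₁. -/
/-!
Write `n` for the integer `2⟪β,α⟫/⟪α,α⟫`. The reflection in `α` sends `β + k • α` to
`β - (n + k) • α`, so it reverses the `α`-string through `β`. Reflecting the top root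
`β + k₁ • α` gives `n + k₁ ≤ k₂` by maximality of `k₂`, and reflecting the bottom root
`β - k₂ • α` gives `k₂ - n ≤ k₁` by maximality of `k₁`; hence `n = k₂ - k₁`.
-/

open scoped InnerProductSpace

/-- Proposition 2.5: for roots `α, β` of a root system `Φ` in a real inner product
space, if `k₁` (resp. `k₂`) is the largest integer `k` with `β + k•α ∈ Φ`
(resp. `β - k•α ∈ Φ`), then the cusp product `2⟪β,α⟫/⟪α,α⟫` equals `k₂ - k₁`. -/
theorem cusp_product_eq_of_root_string {V : Type*} [NormedAddCommGroup V]
    [InnerProductSpace ℝ V] (Φ : Set V) (hfin : Φ.Finite) (hzero : (0 : V) ∉ Φ)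
    (hrefl : ∀ α ∈ Φ, ∀ β ∈ Φ, β - (2 * ⟪β, α⟫_ℝ / ⟪α, α⟫_ℝ) • α ∈ Φ)
    (hint : ∀ α ∈ Φ, ∀ β ∈ Φ, ∃ k : ℤ, 2 * ⟪β, α⟫_ℝ / ⟪α, α⟫_ℝ = (k : ℝ))
    (α β : V) (hα : α ∈ Φ) (hβ : β ∈ Φ) (k₁ k₂ : ℤ)
    (hk₁ : β + (k₁ : ℝ) • α ∈ Φ)
    (hk₁max : ∀ k : ℤ, β + (k : ℝ) • α ∈ Φ → k ≤ k₁)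
    (hk₂ : β - (k₂ : ℝ) • α ∈ Φ)
    (hk₂max : ∀ k : ℤ, β - (k : ℝ) • α ∈ Φ → k ≤ k₂) :
    2 * ⟪β, α⟫_ℝ / ⟪α, α⟫_ℝ = ((k₂ - k₁ : ℤ) : ℝ) := by
  obtain ⟨n, hn⟩ := hint α hα β hβ
  have hα0 : ⟪α, α⟫_ℝ ≠ 0 := by
    rw [inner_self_ne_zero]
    rintro rfl
    exact hzero hα
  have key : ∀ c : ℝ, 2 * ⟪β + c • α, α⟫_ℝ / ⟪α, α⟫_ℝ = n + 2 * c := by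
    intro c
    rw [← hn, inner_add_left, real_inner_smul_left]
    field_simp
  have h₁ : n + k₁ ≤ k₂ := by
    apply hk₂max
    have h := hrefl α hα _ hk₁
    rw [key] at h
    convert h using 1
    push_cast
    module
  have h₂ : k₂ - n ≤ k₁ := by
    apply hk₁max
    rw [sub_eq_add_neg, ← neg_smul] at hk₂
    have h := hrefl α hα _ hk₂
    rw [key] at h
    convert h using 1
    push_cast
    module
  rw [hn]
  congr 1
  omega
end

section
/- Let R be a commutative ring, x : ℕ → R a sequence, and n ≥ 0. Then det A_{2n} = det B_n · det B'_n, where A_{2n} is the 2n×2n matrix with (i,j)-entry x_{|i−j|}, B_n is the n×n matrix with (i,j)-entry x_{|i−j|} − x_{i+j−1}, and B'_n is the n×n matrix with (i,j)-entry x_{|i−j|} + x_{i+j−1} (indices i, j run over 1,…,size). -/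
/-!
Number the `2n` indices outwards from the middle: index `i` of the upper half is the `i`-th one
above the centre, index `i` of the lower half the `i`-th one below it. Two indices on the same
side are at distance `|i - j|`, two on opposite sides at distance `i + j + 1`, so in this ordering
`A_{2n}` is the block matrix `[P, Q; Q, P]` with `P - Q = B_n` and `P + Q = B'_n`. Unipotent block
row and column operations give `det [P, Q; Q, P] = det (P - Q) * det (P + Q)` over any
commutative ring.
-/

/-- The `n × n` matrix `A_n` with `(i,j)`-entry `x_{|i-j|}` (rows and columns
indexed by `1, …, n`, here realized by `Fin n` via `i ↦ i+1`). -/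
def matA {R : Type*} [CommRing R] (x : ℕ → R) (n : ℕ) : Matrix (Fin n) (Fin n) R :=
  Matrix.of fun i j => x ((i : ℤ) - (j : ℤ)).natAbs

/-- The `n × n` matrix `B_n` with `(i,j)`-entry `x_{|i-j|} - x_{i+j-1}`. -/
def matB {R : Type*} [CommRing R] (x : ℕ → R) (n : ℕ) : Matrix (Fin n) (Fin n) R :=
  Matrix.of fun i j => x ((i : ℤ) - (j : ℤ)).natAbs - x ((i : ℕ) + (j : ℕ) + 1)

/-- The `n × n` matrix `B'_n` with `(i,j)`-entry `x_{|i-j|} + x_{i+j-1}`. -/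
def matB' {R : Type*} [CommRing R] (x : ℕ → R) (n : ℕ) : Matrix (Fin n) (Fin n) R :=
  Matrix.of fun i j => x ((i : ℤ) - (j : ℤ)).natAbs + x ((i : ℕ) + (j : ℕ) + 1)

/-- The `n × n` matrix `C_n` with `(i,j)`-entry `x_{|i-j|} - x_{i+j}`. -/
def matC {R : Type*} [CommRing R] (x : ℕ → R) (n : ℕ) : Matrix (Fin n) (Fin n) R :=
  Matrix.of fun i j => x ((i : ℤ) - (j : ℤ)).natAbs - x ((i : ℕ) + (j : ℕ) + 2)

/-- The `n × n` matrix `D_n` with `(i,j)`-entry `x_{|i-j|} + x_{i+j-2}`. -/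
def matD {R : Type*} [CommRing R] (x : ℕ → R) (n : ℕ) : Matrix (Fin n) (Fin n) R :=
  Matrix.of fun i j => x ((i : ℤ) - (j : ℤ)).natAbs + x ((i : ℕ) + (j : ℕ))

/-- The determinant of a block matrix `[P, Q; Q, P]` factors; `2` need not be invertible. -/
lemma det_fromBlocks_symm {R m : Type*} [CommRing R] [Fintype m] [DecidableEq m]
    (P Q : Matrix m m R) :
    (Matrix.fromBlocks P Q Q P).det = (P - Q).det * (P + Q).det := by
  have h : Matrix.fromBlocks 1 (-1) 0 1 * Matrix.fromBlocks P Q Q P * Matrix.fromBlocks 1 1 0 1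
      = Matrix.fromBlocks (P - Q) 0 Q (P + Q) := by
    simp only [Matrix.fromBlocks_multiply, Matrix.fromBlocks_inj]
    refine ⟨?_, ?_, ?_, ?_⟩ <;> noncomm_ring
  have hdet := congrArg Matrix.det h
  simpa [Matrix.det_mul, Matrix.det_fromBlocks_zero₂₁, Matrix.det_fromBlocks_zero₁₂] using hdet

/-- The numbering of `Fin (2 * n)` outwards from the middle: `inl i ↦ n + i` and
`inr i ↦ n - 1 - i`. -/
def centredEquiv (n : ℕ) : Fin n ⊕ Fin n ≃ Fin (2 * n) :=
  (Equiv.sumComm _ _).trans <| (Equiv.sumCongr Fin.revPerm (Equiv.refl _)).trans <|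
    finSumFinEquiv.trans (finCongr (two_mul n).symm)

lemma centredEquiv_inl (n : ℕ) (i : Fin n) : (centredEquiv n (.inl i) : ℕ) = n + i := by
  simp [centredEquiv, add_comm]

lemma centredEquiv_inr (n : ℕ) (i : Fin n) : (centredEquiv n (.inr i) : ℕ) = n - (i + 1) := by
  simp [centredEquiv]

/-- First identity of Propositions 8.9/9.5: `a_{2n} = b_n · b'_n`,
i.e. `det A_{2n} = det B_n · det B'_n`. -/
theorem det_A_even_eq_det_B_mul_det_B' {R : Type*} [CommRing R] (x : ℕ → R) (n : ℕ) :
    (matA x (2 * n)).det = (matB x n).det * (matB' x n).det := by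
  have hB : matB x n = matA x n - Matrix.of fun i j : Fin n => x ((i : ℕ) + (j : ℕ) + 1) := rfl
  have hB' : matB' x n = matA x n + Matrix.of fun i j : Fin n => x ((i : ℕ) + (j : ℕ) + 1) := rfl
  rw [hB, hB', ← det_fromBlocks_symm, ← Matrix.det_submatrix_equiv_self (centredEquiv n)]
  congr 1
  ext (i | i) (j | j) <;>
    simp only [matA, Matrix.submatrix_apply, Matrix.of_apply, Matrix.fromBlocks_apply₁₁,
      Matrix.fromBlocks_apply₁₂, Matrix.fromBlocks_apply₂₁, Matrix.fromBlocks_apply₂₂,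
      centredEquiv_inl, centredEquiv_inr] <;>
    congr 1 <;> omega
end

section
/- Let R be a commutative ring, x : ℕ → R a sequence, and n ≥ 1. Then 4 · det A_{2n} = det C_n · det D_n + det C_{n−1} · det D_{n+1}, where A_{2n} is the 2n×2n matrix with (i,j)-entry x_{|i−j|}, C_k is the k×k matrix with (i,j)-entry x_{|i−j|} − x_{i+j}, and D_k is the k×k matrix with (i,j)-entry x_{|i−j|} + x_{i+j−2} (indices i, j run over 1,…,size; the 0×0 determinant is 1). -/
open Matrix

/-- A matrix that the unipotent `[[1, 0], [N, 1]]` conjugates to the block triangular matrix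
`[[C, b], [0, D]]` has determinant `det C * det D`. -/
lemma det_fromBlocks_of_conj {R α β : Type*} [CommRing R] [Fintype α] [Fintype β]
    [DecidableEq α] [DecidableEq β] {a : Matrix α α R} {b : Matrix α β R} {c : Matrix β α R}
    {d : Matrix β β R} (N : Matrix β α R) (C : Matrix α α R) (D : Matrix β β R)
    (h1 : a = C + b * N) (h2 : N * a + c = D * N) (h3 : N * b + d = D) :
    (fromBlocks a b c d).det = C.det * D.det := by
  have h : fromBlocks 1 0 N 1 * fromBlocks a b c d
      = fromBlocks C b 0 D * fromBlocks 1 0 N 1 := by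
    simp [fromBlocks_multiply, ← h1, h2, h3]
  simpa using congrArg det h

lemma sum_fin_ite_eq {R : Type*} [CommRing R] (n t : ℕ) (f : ℕ → R) :
    (∑ k : Fin n, if (k : ℕ) = t then f k else 0) = if t < n then f t else 0 := by
  rw [Fin.sum_univ_eq_sum_range (fun k => if k = t then f k else 0) n]
  simp

lemma sum_fin_ite_succ_eq {R : Type*} [CommRing R] (n t : ℕ) (f : ℕ → R) :
    (∑ k : Fin n, if t = (k : ℕ) + 1 then f k else 0)
      = if 1 ≤ t ∧ t ≤ n then f (t - 1) else 0 := by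
  rcases t with _ | t
  · simp
  · have := sum_fin_ite_eq n t f
    simp only [Nat.add_right_cancel_iff, eq_comm (a := t)]
    rw [this]
    simp

/-- The matrix `D_n` with its first row halved: row `0` of `D_n` is `2 x_j`, so no division is
needed. -/
def halfRowD {R : Type*} [CommRing R] (x : ℕ → R) (n : ℕ) : Matrix (Fin n) (Fin n) R :=
  of fun i j => if (i : ℕ) = 0 then x j else x ((i : ℤ) - (j : ℤ)).natAbs + x ((i : ℕ) + (j : ℕ))

lemma two_mul_det_halfRowD {R : Type*} [CommRing R] (x : ℕ → R) (m : ℕ) :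
    2 * (halfRowD x (m + 1)).det = (matD x (m + 1)).det := by
  have h : matD x (m + 1)
      = diagonal (fun i : Fin (m + 1) => if i = 0 then (2 : R) else 1) * halfRowD x (m + 1) := by
    ext i j
    rw [diagonal_mul]
    by_cases hi : i = 0
    · subst hi
      simp [matD, halfRowD, two_mul]
    · have : (i : ℕ) ≠ 0 := fun h => hi (Fin.ext h)
      simp [matD, halfRowD, hi]
  rw [h, det_mul, det_diagonal]
  simp

/-- The matrix `A_{2n}`, `n = m + 1`, with last column replaced by
`column n + e * column (-n)` in the indexing of columns by `-(n-1), …, n`. -/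
def foldA {R : Type*} [CommRing R] (x : ℕ → R) (m : ℕ) (e : R) :
    Matrix (Fin (2 * (m + 1))) (Fin (2 * (m + 1))) R :=
  of fun i j => x ((i : ℤ) - (j : ℤ)).natAbs
    + if (j : ℕ) = 2 * m + 1 then e * x ((i : ℕ) + 1) else 0

lemma two_mul_det_matA {R : Type*} [CommRing R] (x : ℕ → R) (m : ℕ) :
    2 * (matA x (2 * (m + 1))).det = (foldA x m (-1)).det + (foldA x m 1).det := by
  have h (e : R) : (foldA x m e).det = (matA x (2 * (m + 1))).det + e *
      ((matA x (2 * (m + 1))).updateCol ⟨2 * m + 1, by omega⟩ fun i => x ((i : ℕ) + 1)).det := by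
    have : foldA x m e = (matA x (2 * (m + 1))).updateCol ⟨2 * m + 1, by omega⟩
        ((fun i => matA x (2 * (m + 1)) i ⟨2 * m + 1, by omega⟩) +
          e • fun i : Fin (2 * (m + 1)) => x ((i : ℕ) + 1)) := by
      ext i j
      by_cases hj : j = ⟨2 * m + 1, by omega⟩
      · subst hj
        simp [foldA, matA]
      · have : (j : ℕ) ≠ 2 * m + 1 := fun h => hj (Fin.ext h)
        simp [foldA, matA, updateCol_ne hj, this]
    rw [this, det_updateCol_add, det_updateCol_smul]
    congr 2
    exact updateCol_eq_self _ _
  rw [h, h]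
  ring

/-- The rows `1, …, n` followed by `0, -1, …, -(n-1)`, with `n = m + 1`; row `r` is at position
`r + n - 1` of `Fin (2 * n)`. -/
noncomputable def oddEquiv (m : ℕ) : Fin (m + 1) ⊕ Fin (m + 1) ≃ Fin (2 * (m + 1)) :=
  Equiv.ofBijective
    (Sum.elim (fun i => ⟨m + 1 + i, by omega⟩) (fun i => ⟨m - i, by omega⟩)) <| by
    rw [Fintype.bijective_iff_injective_and_card]
    refine ⟨?_, by simp; omega⟩
    rintro (i | i) (j | j) h <;> simp [Fin.ext_iff] at h ⊢ <;> omega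

/-- The rows `0, 1, …, n` followed by `-1, …, -(n-1)`, with `n = m + 1`; row `r` is at position
`r + n - 1` of `Fin (2 * n)`. -/
noncomputable def evenEquiv (m : ℕ) : Fin (m + 2) ⊕ Fin m ≃ Fin (2 * (m + 1)) :=
  Equiv.ofBijective
    (Sum.elim (fun i => ⟨m + i, by omega⟩) (fun i => ⟨m - 1 - i, by omega⟩)) <| by
    rw [Fintype.bijective_iff_injective_and_card]
    refine ⟨?_, by simp; omega⟩
    rintro (i | i) (j | j) h <;> simp [Fin.ext_iff] at h ⊢ <;> omega

lemma two_mul_det_foldA_neg_one {R : Type*} [CommRing R] (x : ℕ → R) (m : ℕ) :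
    2 * (foldA x m (-1)).det = (matC x (m + 1)).det * (matD x (m + 1)).det := by
  have h : (foldA x m (-1)).submatrix (oddEquiv m) (oddEquiv m) = fromBlocks
      (of fun (i : Fin (m + 1)) (j : Fin (m + 1)) => x ((i : ℤ) - (j : ℤ)).natAbs
        - if (j : ℕ) = m then x ((i : ℕ) + j + 2) else 0)
      (of fun (i : Fin (m + 1)) (j : Fin (m + 1)) => x ((i : ℕ) + j + 1))
      (of fun (i : Fin (m + 1)) (j : Fin (m + 1)) => x ((i : ℕ) + j + 1)
        - if (j : ℕ) = m then x ((j : ℤ) + 1 - (i : ℤ)).natAbs else 0)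
      (of fun (i : Fin (m + 1)) (j : Fin (m + 1)) => x ((i : ℤ) - (j : ℤ)).natAbs) := by
    ext (i | i) (j | j) <;> simp [foldA, oddEquiv] <;> grind
  -- Left multiplication by the unipotent adds row `i` to row `-i` for `1 ≤ i ≤ m`; its inverse on
  -- the right subtracts column `-j` from column `j`.
  rw [← det_submatrix_equiv_self (oddEquiv m), h,
    det_fromBlocks_of_conj (of fun (i k : Fin (m + 1)) => if (i : ℕ) = (k : ℕ) + 1 then 1 else 0)
      (matC x (m + 1)) (halfRowD x (m + 1)), ← two_mul_det_halfRowD]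
  · ring
  · ext i j
    have := sum_fin_ite_eq (m + 1) (j + 1) (fun k => x (i + k + 1))
    simp [mul_apply, this, matC]
    grind
  · ext i j
    have h1 := sum_fin_ite_succ_eq (m + 1) i (fun k => x ((k : ℤ) - (j : ℤ)).natAbs
        - if (j : ℕ) = m then x (k + j + 2) else 0)
    have h2 := sum_fin_ite_eq (m + 1) (j + 1) (fun k => if (i : ℕ) = 0 then x k
      else x ((i : ℤ) - (k : ℤ)).natAbs + x (i + k))
    simp only [mul_apply, Matrix.add_apply, of_apply, halfRowD, ite_mul, mul_ite, one_mul, zero_mul,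
      mul_one, mul_zero]
    rw [h1, h2]
    grind
  · ext i j
    have h1 := sum_fin_ite_succ_eq (m + 1) i (fun k => x (k + j + 1))
    simp only [mul_apply, Matrix.add_apply, of_apply, halfRowD, ite_mul, one_mul, zero_mul]
    rw [h1]
    grind

lemma two_mul_det_foldA_one {R : Type*} [CommRing R] (x : ℕ → R) (m : ℕ) :
    2 * (foldA x m 1).det = (matC x m).det * (matD x (m + 2)).det := by
  have h : (foldA x m 1).submatrix (evenEquiv m) (evenEquiv m) = fromBlocks
      (of fun (i : Fin (m + 2)) (j : Fin (m + 2)) => x ((i : ℤ) - (j : ℤ)).natAbs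
        + if (j : ℕ) = m + 1 then x ((i : ℕ) + j) else 0)
      (of fun (i : Fin (m + 2)) (j : Fin m) => x ((i : ℕ) + j + 1))
      (of fun (i : Fin m) (j : Fin (m + 2)) => x ((i : ℕ) + j + 1)
        + if (j : ℕ) = m + 1 then x ((j : ℤ) - 1 - (i : ℤ)).natAbs else 0)
      (of fun (i : Fin m) (j : Fin m) => x ((i : ℤ) - (j : ℤ)).natAbs) := by
    ext (i | i) (j | j) <;> simp [foldA, evenEquiv] <;> grind
  -- Left multiplication by the unipotent subtracts row `i` from row `-i` for `1 ≤ i ≤ m`; its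
  -- inverse on the right adds column `-j` to column `j`.
  rw [← det_submatrix_equiv_self (evenEquiv m), h,
    det_fromBlocks_of_conj (of fun (i : Fin m) (k : Fin (m + 2)) =>
        if (k : ℕ) = (i : ℕ) + 1 then -1 else 0)
      (halfRowD x (m + 2))ᵀ (matC x m), ← two_mul_det_halfRowD, det_transpose]
  · ring
  · ext i j
    have h1 := sum_fin_ite_succ_eq m j (fun k => - x (i + k + 1))
    simp only [mul_apply, Matrix.add_apply, of_apply, halfRowD, transpose_apply, mul_ite,
      mul_neg, mul_one, mul_zero]
    rw [h1]
    grind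
  · ext i j
    have h1 := sum_fin_ite_eq (m + 2) (i + 1) (fun k => - (x ((k : ℤ) - (j : ℤ)).natAbs
        + if (j : ℕ) = m + 1 then x (k + j) else 0))
    have h2 := sum_fin_ite_succ_eq m j (fun k => - (x ((i : ℤ) - (k : ℤ)).natAbs
      - x (i + k + 2)))
    simp only [mul_apply, Matrix.add_apply, of_apply, matC, ite_mul, mul_ite, neg_mul, one_mul,
      zero_mul, mul_neg, mul_one, mul_zero]
    rw [h1, h2]
    grind
  · ext i j
    have h1 := sum_fin_ite_eq (m + 2) (i + 1) (fun k => - x (k + j + 1))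
    simp only [mul_apply, Matrix.add_apply, of_apply, matC, ite_mul, neg_mul, one_mul, zero_mul]
    rw [h1]
    grind

/-- Identity `2·a_{2n} = c_n·d_n + c_{n-1}·d_{n+1}` of Proposition 9.5; since
`det D_k = 2·d_k`, it reads
`4 · det A_{2n} = det C_n · det D_n + det C_{n-1} · det D_{n+1}`. -/
theorem four_det_A_even_eq {R : Type*} [CommRing R] (x : ℕ → R) (n : ℕ) (hn : 1 ≤ n) :
    4 * (matA x (2 * n)).det =
      (matC x n).det * (matD x n).det + (matC x (n - 1)).det * (matD x (n + 1)).det := by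
  obtain ⟨m, rfl⟩ : ∃ m, n = m + 1 := ⟨n - 1, by omega⟩
  rw [Nat.add_sub_cancel]
  linear_combination 2 * two_mul_det_matA x m + two_mul_det_foldA_neg_one x m
    + two_mul_det_foldA_one x m
end

section
/- Let R be a commutative ring, x : ℕ → R a sequence, and n ≥ 0. Then 2 · det A_{2n+1} = det B_n · det B'_{n+1} + det B'_n · det B_{n+1}, where A_{2n+1} is the (2n+1)×(2n+1) matrix with (i,j)-entry x_{|i−j|}, B_k is the k×k matrix with (i,j)-entry x_{|i−j|} − x_{i+j−1}, and B'_k is the k×k matrix with (i,j)-entry x_{|i−j|} + x_{i+j−1} (indices i, j run over 1,…,size; the 0×0 determinant is 1). -/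
open Matrix

section Blocks

variable {R : Type*} [CommRing R] {m : Type*} [Fintype m] [DecidableEq m]

lemma adjugate_lowerBlocks_inl (S Q D : Matrix m m R) (i : m) :
    (fromBlocks S 0 Q D).adjugate (Sum.inl i) (Sum.inl i) = S.adjugate i i * D.det := by
  rw [adjugate_apply, adjugate_apply, ← det_fromBlocks_zero₁₂ _ Q D]
  congr 1
  ext (a | a) (b | b) <;> simp [updateRow_apply, Pi.single_apply]

lemma adjugate_lowerBlocks_inr (S Q D : Matrix m m R) (i : m) :
    (fromBlocks S 0 Q D).adjugate (Sum.inr i) (Sum.inr i) = S.det * D.adjugate i i := by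
  rw [adjugate_apply, adjugate_apply, ← det_fromBlocks_zero₁₂ S (Q.updateRow i 0) _]
  congr 1
  ext (a | a) (b | b) <;> simp [updateRow_apply, Pi.single_apply]

/-- For `M = [[P, Q], [Q, P]]`, the two diagonal entries of `adj M` at the copies of `i` add up to
the corresponding entries for the block triangular matrix `[[P + Q, 0], [Q, P - Q]]`; the unknown
lower left block of the adjugate of the latter cancels in the sum. -/
lemma adjugate_symm_blocks (P Q : Matrix m m R) (i : m) :
    (fromBlocks P Q Q P).adjugate (Sum.inl i) (Sum.inl i)
      + (fromBlocks P Q Q P).adjugate (Sum.inr i) (Sum.inr i)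
      = (P + Q).adjugate i i * (P - Q).det + (P + Q).det * (P - Q).adjugate i i := by
  set M := fromBlocks P Q Q P with hM
  let U : Matrix (m ⊕ m) (m ⊕ m) R := fromBlocks 1 1 0 1
  let V : Matrix (m ⊕ m) (m ⊕ m) R := fromBlocks 1 (-1) 0 1
  let L : Matrix (m ⊕ m) (m ⊕ m) R := fromBlocks (P + Q) 0 Q (P - Q)
  have hL : U * (M * V) = L := by
    simp only [U, V, L, hM, fromBlocks_multiply]
    congr 1 <;> simp
    abel
  have hU : U.adjugate * U = 1 := by simp [adjugate_mul, U]
  have hV : V * V.adjugate = 1 := by simp [mul_adjugate, V]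
  have hadj : M.adjugate = V * L.adjugate * U := by
    calc M.adjugate = (V * V.adjugate) * M.adjugate * (U.adjugate * U) := by rw [hU, hV]; simp
      _ = V * L.adjugate * U := by
        rw [← hL, adjugate_mul_distrib, adjugate_mul_distrib]; simp only [Matrix.mul_assoc]
  have h1 := adjugate_lowerBlocks_inl (P + Q) Q (P - Q) i
  have h2 := adjugate_lowerBlocks_inr (P + Q) Q (P - Q) i
  rw [← h1, ← h2, hadj]
  change _ = L.adjugate _ _ + L.adjugate _ _
  -- The upper right block of `adj L` drops out too, so its vanishing is not needed.
  rw [← fromBlocks_toBlocks L.adjugate]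
  simp only [U, V, fromBlocks_multiply]
  simp

end Blocks

section Corners

variable {R : Type*} [CommRing R]

lemma adjugate_last_last {k : ℕ} (M : Matrix (Fin (k + 1)) (Fin (k + 1)) R) :
    M.adjugate (Fin.last k) (Fin.last k) = (M.submatrix Fin.castSucc Fin.castSucc).det := by
  rw [adjugate_fin_succ_eq_det_submatrix, Fin.succAbove_last, ← two_mul, pow_mul]
  simp

lemma adjugate_zero_zero {k : ℕ} (M : Matrix (Fin (k + 1)) (Fin (k + 1)) R) :
    M.adjugate 0 0 = (M.submatrix Fin.succ Fin.succ).det := by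
  rw [adjugate_fin_succ_eq_det_submatrix, Fin.succAbove_zero]
  simp

end Corners

/-- Two copies of `Fin (n + 1)` placed back to back at their zeros: the left copy is laid out in decreasing order
on the lower half of `Fin (2 * n + 1 + 1)`, the right copy in increasing order on the upper half. -/
def centreOut (n : ℕ) : Fin (n + 1) ⊕ Fin (n + 1) ≃ Fin (2 * n + 1 + 1) :=
  ((Equiv.sumCongr Fin.revPerm (Equiv.refl _)).trans finSumFinEquiv).trans
    (finCongr (by omega))

/-- The Hankel matrix with `(i,j)`-entry `x_{i+j-1}` for `i, j` counted from `1`: the off-diagonal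
block of `A_{2n}` once its indices are numbered from the centre outwards. -/
def matQ {R : Type*} [CommRing R] (x : ℕ → R) (n : ℕ) : Matrix (Fin n) (Fin n) R :=
  Matrix.of fun i j => x ((i : ℕ) + (j : ℕ) + 1)

lemma matA_submatrix_centreOut {R : Type*} [CommRing R] (x : ℕ → R) (n : ℕ) :
    (matA x (2 * n + 1 + 1)).submatrix (centreOut n) (centreOut n) =
      fromBlocks (matA x (n + 1)) (matQ x (n + 1)) (matQ x (n + 1)) (matA x (n + 1)) := by
  ext (a | a) (b | b) <;> simp [matA, matQ, centreOut] <;> congr 1 <;> omega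

/-- Identity `2·a_{2n+1} = b_n·b'_{n+1} + b'_n·b_{n+1}` of Proposition 9.5:
`2 · det A_{2n+1} = det B_n · det B'_{n+1} + det B'_n · det B_{n+1}`. -/
theorem two_det_A_odd_eq_B_B' {R : Type*} [CommRing R] (x : ℕ → R) (n : ℕ) :
    2 * (matA x (2 * n + 1)).det =
      (matB x n).det * (matB' x (n + 1)).det + (matB' x n).det * (matB x (n + 1)).det := by
  have key := adjugate_symm_blocks (matA x (n + 1)) (matQ x (n + 1)) (Fin.last n)
  have hP : matA x (n + 1) + matQ x (n + 1) = matB' x (n + 1) := by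
    ext i j; simp [matA, matB', matQ]
  have hM : matA x (n + 1) - matQ x (n + 1) = matB x (n + 1) := by
    ext i j; simp [matA, matB, matQ]
  have hl : centreOut n (Sum.inl (Fin.last n)) = 0 := by
    ext; simp [centreOut]
  have hr : centreOut n (Sum.inr (Fin.last n)) = Fin.last (2 * n + 1) := by
    ext; simp [centreOut]; omega
  have hA0 : (matA x (2 * n + 1 + 1)).submatrix Fin.succ Fin.succ = matA x (2 * n + 1) := by
    ext i j; simp [matA]
  have hA1 : (matA x (2 * n + 1 + 1)).submatrix Fin.castSucc Fin.castSucc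
      = matA x (2 * n + 1) := by
    ext i j; simp [matA]
  have hB : (matB x (n + 1)).submatrix Fin.castSucc Fin.castSucc = matB x n := by
    ext i j; simp [matB]
  have hB' : (matB' x (n + 1)).submatrix Fin.castSucc Fin.castSucc = matB' x n := by
    ext i j; simp [matB']
  rw [← matA_submatrix_centreOut, adjugate_submatrix_equiv_self, submatrix_apply, submatrix_apply,
    hl, hr, adjugate_zero_zero, adjugate_last_last, hA0, hA1, hP, hM, adjugate_last_last,
    adjugate_last_last, hB, hB'] at key
  linear_combination key
end

section
/- Let R be a commutative ring, x : ℕ → R a sequence, and let σx : ℕ → R be the sequence (σx)_k = (−1)^k · x_k. Then for every n ≥ 0: det A_n(σx) = det A_n(x), det C_n(σx) = det C_n(x), det D_n(σx) = det D_n(x), and det B_n(σx) = det B'_n(x), where A_n(y), B_n(y), B'_n(y), C_n(y), D_n(y) denote the n×n matrices with (i,j)-entries y_{|i−j|}, y_{|i−j|} − y_{i+j−1}, y_{|i−j|} + y_{i+j−1}, y_{|i−j|} − y_{i+j}, y_{|i−j|} + y_{i+j−2} respectively (indices i, j run over 1,…,n). -/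
theorem det_eq_of_checkerboard {R : Type*} [CommRing R] {n : ℕ} {M N : Matrix (Fin n) (Fin n) R}
    (h : ∀ i j, M i j = (-1) ^ ((i : ℕ) + (j : ℕ)) * N i j) : M.det = N.det := by
  have hM : M = Matrix.diagonal (fun i : Fin n => (-1 : R) ^ (i : ℕ)) * N *
      Matrix.diagonal (fun i : Fin n => (-1 : R) ^ (i : ℕ)) := by
    ext i j
    rw [Matrix.mul_diagonal, Matrix.diagonal_mul, h]
    ring
  have hD : (∏ i : Fin n, (-1 : R) ^ (i : ℕ)) * ∏ i : Fin n, (-1 : R) ^ (i : ℕ) = 1 := by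
    rw [← Finset.prod_mul_distrib]
    exact Finset.prod_eq_one fun i _ => by rw [← mul_pow]; simp
  rw [hM, Matrix.det_mul, Matrix.det_mul, Matrix.det_diagonal, mul_right_comm, hD, one_mul]

theorem neg_one_pow_natAbs_sub {R : Type*} [CommRing R] (i j : ℕ) :
    (-1 : R) ^ ((i : ℤ) - (j : ℤ)).natAbs = (-1) ^ (i + j) := by
  rw [neg_one_pow_eq_pow_mod_two, neg_one_pow_eq_pow_mod_two (i + j)]
  congr 1
  omega

/-- Proposition 8.8 together with `b'_n = σ(b_n)` from the proof of
Proposition 8.9: if `σx` is the sequence `(σx)_k = (-1)^k · x_k`, then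
`det A_n(σx) = det A_n(x)`, `det C_n(σx) = det C_n(x)`, `det D_n(σx) = det D_n(x)`,
and `det B_n(σx) = det B'_n(x)` for every `n ≥ 0`. -/
theorem det_sigma_eq {R : Type*} [CommRing R] (x : ℕ → R) (n : ℕ) :
    (matA (fun k => (-1) ^ k * x k) n).det = (matA x n).det ∧
    (matC (fun k => (-1) ^ k * x k) n).det = (matC x n).det ∧
    (matD (fun k => (-1) ^ k * x k) n).det = (matD x n).det ∧
    (matB (fun k => (-1) ^ k * x k) n).det = (matB' x n).det := by
  refine ⟨det_eq_of_checkerboard fun i j => ?_, det_eq_of_checkerboard fun i j => ?_,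
    det_eq_of_checkerboard fun i j => ?_, det_eq_of_checkerboard fun i j => ?_⟩ <;>
  simp only [matA, matB, matB', matC, matD, Matrix.of_apply, neg_one_pow_natAbs_sub] <;>
  ring
end

section
/- Let R be a commutative ring and x : ℕ → R a sequence. Write b₁ = det B₁, b₂ = det B₂, c₁ = det C₁, c₂ = det C₂, D₂ = det D₂, D₃ = det D₃, where B_k, C_k, D_k are the k×k matrices with (i,j)-entries x_{|i−j|} − x_{i+j−1}, x_{|i−j|} − x_{i+j}, x_{|i−j|} + x_{i+j−2} respectively (indices i, j run over 1,…,k). Then 4·b₁·b₂²·c₁ + 4·b₁²·c₂·D₂ + 4·b₁²·c₁·D₃ + 4·b₂·c₁²·D₂ + 4·b₂²·D₂ = b₁·c₁·c₂·D₂ + b₁·c₁²·D₃ + 16·b₁·b₂·c₁·D₂. -/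
/-- The identity of Section 9.2 of the paper (with `d_k = (1/2)·det D_k` cleared
of denominators), which yields 8 rank-6 semisimple subgroups of `SU(15)` with
linearly dependent dimension data:
`4b₁b₂²c₁ + 4b₁²c₂D₂ + 4b₁²c₁D₃ + 4b₂c₁²D₂ + 4b₂²D₂ = b₁c₁c₂D₂ + b₁c₁²D₃ + 16b₁b₂c₁D₂`. -/
theorem SU15_relation {R : Type*} [CommRing R] (x : ℕ → R) :
    4 * (matB x 1).det * (matB x 2).det ^ 2 * (matC x 1).det
      + 4 * (matB x 1).det ^ 2 * (matC x 2).det * (matD x 2).det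
      + 4 * (matB x 1).det ^ 2 * (matC x 1).det * (matD x 3).det
      + 4 * (matB x 2).det * (matC x 1).det ^ 2 * (matD x 2).det
      + 4 * (matB x 2).det ^ 2 * (matD x 2).det
      = (matB x 1).det * (matC x 1).det * (matC x 2).det * (matD x 2).det
      + (matB x 1).det * (matC x 1).det ^ 2 * (matD x 3).det
      + 16 * (matB x 1).det * (matB x 2).det * (matC x 1).det * (matD x 2).det := by
  -- With all six determinants expanded, both sides are polynomials in `x 0, …, x 4`.
  simp [matB, matC, matD, Matrix.det_fin_two, Matrix.det_fin_three]
  ring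
end

section
/- Define Q : ℕ⁴ → ℕ by Q(a₁,a₂,a₃,a₄) = 2a₁² + 6a₂² + 3a₃² + a₄² + 6a₁a₂ + 4a₁a₃ + 2a₁a₄ + 8a₂a₃ + 4a₂a₄ + 3a₃a₄. Then: (a) for every integer k with 1 ≤ k ≤ 12 and k ≠ 9, there is exactly one tuple (a₁,a₂,a₃,a₄) ∈ ℕ⁴ with Q(a₁,a₂,a₃,a₄) = k; and (b) the only tuples (a₁,a₂,a₃,a₄) ∈ ℕ⁴ with Q(a₁,a₂,a₃,a₄) = 9 are (0,0,0,3) and (1,0,1,0). -/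
/-!
The form `F4normSq` has nonnegative coefficients, so a bound on its value bounds every coordinate:
squared norm at most `12` forces `a₁ < 3`, `a₂ < 2`, `a₃ < 3`, `a₄ < 4` (`F4normSq_bounds`).
Evaluating the form on these 72 tuples gives each value `1, …, 12` once, except `9`, which is
attained twice; `F4shortWeight` lists the tuples attaining the other values.
-/

/-- The squared norm `|λ|²` of the dominant integral weight
`λ = a₁ω₁ + a₂ω₂ + a₃ω₃ + a₄ω₄` of the root system `F₄` (Bourbaki numbering,
short roots of length 1). -/
def F4normSq (a : ℕ × ℕ × ℕ × ℕ) : ℕ :=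
  2 * a.1 ^ 2 + 6 * a.2.1 ^ 2 + 3 * a.2.2.1 ^ 2 + a.2.2.2 ^ 2 +
    6 * a.1 * a.2.1 + 4 * a.1 * a.2.2.1 + 2 * a.1 * a.2.2.2 +
    8 * a.2.1 * a.2.2.1 + 4 * a.2.1 * a.2.2.2 + 3 * a.2.2.1 * a.2.2.2

/-- Each square term alone bounds its coordinate, since all coefficients of the norm form are
nonnegative; so the weights of squared norm at most `12` lie in a small box. -/
lemma F4normSq_bounds {a b c d : ℕ} (h : F4normSq (a, b, c, d) ≤ 12) :
    a < 3 ∧ b < 2 ∧ c < 3 ∧ d < 4 := by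
  simp only [F4normSq] at h
  refine ⟨?_, ?_, ?_, ?_⟩ <;> by_contra! hlt <;> nlinarith [Nat.zero_le (a * b),
    Nat.zero_le (a * c), Nat.zero_le (a * d), Nat.zero_le (b * c), Nat.zero_le (b * d),
    Nat.zero_le (c * d), Nat.zero_le (a ^ 2), Nat.zero_le (b ^ 2), Nat.zero_le (c ^ 2),
    Nat.zero_le (d ^ 2)]

/-- The nonzero dominant weights of squared norm at most `12` other than the two of squared
norm `9`, indexed by that squared norm; the value at the remaining indices is irrelevant. -/
def F4shortWeight : ℕ → ℕ × ℕ × ℕ × ℕ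
  | 1 => (0, 0, 0, 1)
  | 2 => (1, 0, 0, 0)
  | 3 => (0, 0, 1, 0)
  | 4 => (0, 0, 0, 2)
  | 5 => (1, 0, 0, 1)
  | 6 => (0, 1, 0, 0)
  | 7 => (0, 0, 1, 1)
  | 8 => (2, 0, 0, 0)
  | 10 => (1, 0, 0, 2)
  | 11 => (0, 1, 0, 1)
  | 12 => (0, 0, 2, 0)
  | _ => (0, 0, 0, 0)

/-- Lemma of Section 9.4 of the paper: for each `k` with `1 ≤ k ≤ 12`, `k ≠ 9`,
there is a unique dominant integral `F₄`-weight with `|λ|² = k`, while the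
weights with `|λ|² = 9` are exactly `3ω₄` and `ω₁ + ω₃`. -/
theorem F4_short_weights :
    (∀ k : ℕ, 1 ≤ k → k ≤ 12 → k ≠ 9 → ∃! a : ℕ × ℕ × ℕ × ℕ, F4normSq a = k) ∧
    (∀ a : ℕ × ℕ × ℕ × ℕ, F4normSq a = 9 ↔ a = (0, 0, 0, 3) ∨ a = (1, 0, 1, 0)) := by
  constructor
  · intro k hk1 hk12 hk9
    refine ⟨F4shortWeight k, ?_, ?_⟩
    · interval_cases k <;> first | rfl | exact absurd rfl hk9
    · rintro ⟨a, b, c, d⟩ h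
      obtain ⟨ha, hb, hc, hd⟩ := F4normSq_bounds (h.trans_le hk12)
      subst h
      have key : ∀ (a : Fin 3) (b : Fin 2) (c : Fin 3) (d : Fin 4),
          1 ≤ F4normSq (a.1, b.1, c.1, d.1) →
          F4normSq (a.1, b.1, c.1, d.1) ≤ 12 → F4normSq (a.1, b.1, c.1, d.1) ≠ 9 →
          (a.1, b.1, c.1, d.1) = F4shortWeight (F4normSq (a.1, b.1, c.1, d.1)) := by decide
      exact key ⟨a, ha⟩ ⟨b, hb⟩ ⟨c, hc⟩ ⟨d, hd⟩ hk1 hk12 hk9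
  · rintro ⟨a, b, c, d⟩
    constructor
    · intro h
      obtain ⟨ha, hb, hc, hd⟩ := F4normSq_bounds (h.trans_le (by norm_num))
      have key : ∀ (a : Fin 3) (b : Fin 2) (c : Fin 3) (d : Fin 4),
          F4normSq (a.1, b.1, c.1, d.1) = 9 →
          (a.1, b.1, c.1, d.1) = (0, 0, 0, 3) ∨ (a.1, b.1, c.1, d.1) = (1, 0, 1, 0) := by decide
      exact key ⟨a, ha⟩ ⟨b, hb⟩ ⟨c, hc⟩ ⟨d, hd⟩ h
    · rintro (h | h) <;> rw [h] <;> rfl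
end

section
/- For a positive integer n, let str(n) denote the multiset {n−1−2j : j = 0, 1, …, n−1} of integers (so str(n) = {n−1, n−3, …, 1−n} with n elements). For a multiset P of positive integers, let S(P) denote the multiset sum of str(n) over n ∈ P (with multiplicity). If P and Q are multisets of positive integers with S(P) = S(Q), then P = Q. -/
/-!
For a natural number `k`, the string of `n` contains both or neither of `k` and `k + 2`, except
that the string of `n = k + 1` has top entry `k`. Hence the multiplicity of `k + 1` in `P` is the
multiplicity of `k` minus that of `k + 2` in the sum of the strings (`count_sum_strMultiset`), so
the sum determines `P` away from `0`, which occurs in neither `P` nor `Q`.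
-/

/-- The multiset `{n-1, n-3, …, 1-n}` of integers attached to a positive
integer `n`; it is the multiset of entries of the weight `2δ` of the root
system `A_{n-1}`. -/
def strMultiset (n : ℕ) : Multiset ℤ :=
  (Multiset.range n).map fun j => (n : ℤ) - 1 - 2 * (j : ℤ)

/-- In the definition of `strMultiset` the bound variable `j` is elaborated as an integer, so
`Multiset.range n` is coerced to `Multiset ℤ` through the monad structure of `Multiset`. This is
the same multiset as the image of `Multiset.range n` under a function on `ℕ`. -/
theorem strMultiset_eq_map (n : ℕ) :
    strMultiset n = (Multiset.range n).map fun j : ℕ => (n : ℤ) - 1 - 2 * (j : ℤ) := by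
  simp [strMultiset, Multiset.bind_singleton, Multiset.map_map]

theorem count_strMultiset (n k : ℕ) :
    (strMultiset n).count (k : ℤ) =
      (strMultiset n).count ((k : ℤ) + 2) + if k + 1 = n then 1 else 0 := by
  have hnd : (strMultiset n).Nodup := by
    rw [strMultiset_eq_map]
    exact (Multiset.nodup_range n).map (fun a b hab => by omega)
  have hmem : (k : ℤ) ∈ strMultiset n ↔ (k : ℤ) + 2 ∈ strMultiset n ∨ k + 1 = n := by
    simp only [strMultiset_eq_map, Multiset.mem_map, Multiset.mem_range]
    constructor
    · rintro ⟨j, hj, hjk⟩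
      rcases j with _ | j
      · right; push_cast at hjk; omega
      · left; exact ⟨j, by omega, by push_cast at hjk; omega⟩
    · rintro (⟨j, hj, hjk⟩ | hk)
      -- The index `j + 1` is still in range because `k ≥ 0`.
      · exact ⟨j + 1, by omega, by push_cast; omega⟩
      · exact ⟨0, by omega, by push_cast; omega⟩
  have hnot : k + 1 = n → (k : ℤ) + 2 ∉ strMultiset n := by
    simp only [strMultiset_eq_map, Multiset.mem_map, Multiset.mem_range]
    rintro hk ⟨j, hj, hjk⟩
    omega
  rw [Multiset.count_eq_of_nodup hnd, Multiset.count_eq_of_nodup hnd]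
  split_ifs <;> simp_all

theorem count_sum_strMultiset (P : Multiset ℕ) (k : ℕ) :
    (P.map strMultiset).sum.count (k : ℤ) =
      (P.map strMultiset).sum.count ((k : ℤ) + 2) + P.count (k + 1) := by
  induction P using Multiset.induction_on with
  | empty => simp
  | cons n P ih =>
    simp only [Multiset.map_cons, Multiset.sum_cons, Multiset.count_add, Multiset.count_cons]
    rw [ih, count_strMultiset n k]
    ring

/-- Combinatorial core of the linear-independence result for type `A`
(Proposition 9.2 of the paper): a multiset `P` of positive integers is
determined by the multiset sum of the strings `{n-1, n-3, …, 1-n}` over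
`n ∈ P`. -/
theorem multiset_eq_of_strings_eq (P Q : Multiset ℕ)
    (hP : ∀ n ∈ P, 0 < n) (hQ : ∀ n ∈ Q, 0 < n)
    (h : (P.map strMultiset).sum = (Q.map strMultiset).sum) : P = Q := by
  ext m
  rcases m with _ | k
  · rw [Multiset.count_eq_zero_of_notMem fun h0 => (hP 0 h0).false,
      Multiset.count_eq_zero_of_notMem fun h0 => (hQ 0 h0).false]
  · have h1 := count_sum_strMultiset P k
    have h2 := count_sum_strMultiset Q k
    rw [h] at h1
    omega
end

section
/- Let G = ℤ/2ℤ × ℤ/2ℤ be the Klein four-group and let H₁, H₂, H₃ be its three subgroups of order 2 (generated by (1,0), (0,1), and (1,1) respectively). Then for every finite-dimensional complex representation (V, ρ) of G, dim V + 2·dim V^G = dim V^{H₁} + dim V^{H₂} + dim V^{H₃}, where V^H = {v ∈ V : ρ(h)v = v for all h ∈ H}. -/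
/-!
For a finite group `H`, the average of the operators `ρ h`, `h ∈ H`, is a projection onto `V^H`,
so its trace is `dim V^H`. Writing `χ` for the character of `ρ` and `a, b, c` for the three
involutions of the Klein four-group, this gives `2 dim V^⟨g⟩ = dim V + χ g` for each involution `g`
(`two_mul_finrank_fixed_involution`) and `4 dim V^G = dim V + χ a + χ b + χ c`
(`four_mul_finrank_fixed_top`). Summing the former over `g = a, b, c` and comparing with the latter
yields the relation.
-/

/-- The submodule `V^S` of vectors fixed by `ρ(g)` for every `g` in a subset `S`
of `G`, for a representation `ρ` of `G` on `V`. -/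
def fixedSubmodule {k G V : Type*} [CommSemiring k] [Monoid G] [AddCommMonoid V]
    [Module k V] (ρ : Representation k G V) (S : Set G) : Submodule k V where
  carrier := {v | ∀ g ∈ S, ρ g v = v}
  add_mem' := fun ha hb g hg => by rw [map_add, ha g hg, hb g hg]
  zero_mem' := fun g hg => by rw [map_zero]
  smul_mem' := fun c v hv g hg => by rw [map_smul, hv g hg]

/-- The Klein four-group. -/
abbrev KleinFour := Multiplicative (ZMod 2 × ZMod 2)

/-- Trace of the projection `(1 + ρ a) / 2` onto the vectors fixed by an involution `a`. -/
lemma two_mul_finrank_fixed_involution {G V : Type*} [Group G] [AddCommGroup V] [Module ℂ V]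
    [FiniteDimensional ℂ V] (ρ : Representation ℂ G V) (a : G) (ha : a * a = 1) :
    2 * (Module.finrank ℂ (fixedSubmodule ρ ((Subgroup.closure {a} : Subgroup G) : Set G)) : ℂ) =
      Module.finrank ℂ V + LinearMap.trace ℂ V (ρ a) := by
  have hmem : ∀ v, v ∈ fixedSubmodule ρ ((Subgroup.closure {a} : Subgroup G) : Set G) ↔
      ρ a v = v := by
    intro v
    refine ⟨fun h => h a (Subgroup.subset_closure rfl), fun h g hg => ?_⟩
    induction hg using Subgroup.closure_induction with
    | mem x hx => rw [Set.mem_singleton_iff.mp hx, h]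
    | one => simp
    | mul x y _ _ hx hy => rw [map_mul, Module.End.mul_apply, hy, hx]
    | inv x _ hx =>
      rw [← hx, ← Module.End.mul_apply, ← map_mul]
      simp [hx]
  have hproj : LinearMap.IsProj (fixedSubmodule ρ ((Subgroup.closure {a} : Subgroup G) : Set G))
      ((1 / 2 : ℂ) • (1 + ρ a)) := by
    constructor
    · intro v
      rw [hmem]
      have h2 : ρ a (ρ a v) = v := by
        rw [← Module.End.mul_apply, ← map_mul, ha, map_one, Module.End.one_apply]
      simp [h2, add_comm]
    · intro v hv
      rw [hmem] at hv
      simp only [LinearMap.smul_apply, LinearMap.add_apply, Module.End.one_apply, hv]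
      module
  have ht := hproj.trace
  rw [map_smul, map_add, LinearMap.trace_one, smul_eq_mul] at ht
  rw [← ht]
  ring

/-- Trace of the averaging projection onto the invariants of the Klein four-group. -/
lemma four_mul_finrank_fixed_top {V : Type*} [AddCommGroup V] [Module ℂ V]
    [FiniteDimensional ℂ V] (ρ : Representation ℂ KleinFour V) :
    4 * (Module.finrank ℂ
        (fixedSubmodule ρ ((⊤ : Subgroup KleinFour) : Set KleinFour)) : ℂ) =
      Module.finrank ℂ V +
        LinearMap.trace ℂ V (ρ (Multiplicative.ofAdd ((1 : ZMod 2), (0 : ZMod 2)))) +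
        LinearMap.trace ℂ V (ρ (Multiplicative.ofAdd ((0 : ZMod 2), (1 : ZMod 2)))) +
        LinearMap.trace ℂ V (ρ (Multiplicative.ofAdd ((1 : ZMod 2), (1 : ZMod 2)))) := by
  have hproj : LinearMap.IsProj (fixedSubmodule ρ ((⊤ : Subgroup KleinFour) : Set KleinFour))
      ((1 / 4 : ℂ) • ∑ g, ρ g) := by
    constructor
    · intro v g _
      simp only [LinearMap.smul_apply, LinearMap.sum_apply, map_smul, map_sum]
      congr 1
      exact Fintype.sum_equiv (Equiv.mulLeft g) _ _ fun h => by simp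
    · intro v hv
      have hv' : ∀ g, ρ g v = v := fun g => hv g trivial
      have hc : Fintype.card KleinFour = 4 := rfl
      simp only [LinearMap.smul_apply, LinearMap.sum_apply, hv', Finset.sum_const,
        Finset.card_univ, hc]
      module
  have hsum : ∑ g, ρ g = 1 + ρ (Multiplicative.ofAdd ((1 : ZMod 2), (0 : ZMod 2))) +
      ρ (Multiplicative.ofAdd ((0 : ZMod 2), (1 : ZMod 2))) +
      ρ (Multiplicative.ofAdd ((1 : ZMod 2), (1 : ZMod 2))) := by
    have hu : (Finset.univ : Finset KleinFour) =
        {1, Multiplicative.ofAdd (1, 0), Multiplicative.ofAdd (0, 1),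
          Multiplicative.ofAdd (1, 1)} := by decide
    rw [hu, Finset.sum_insert (by decide), Finset.sum_insert (by decide),
      Finset.sum_insert (by decide), Finset.sum_singleton, map_one]
    abel
  have ht := hproj.trace
  rw [hsum, map_smul, map_add, map_add, map_add, LinearMap.trace_one, smul_eq_mul] at ht
  rw [← ht]
  ring

/-- Core of Proposition 11.4 of the paper: for the Klein four-group `G` with
its three subgroups `H₁, H₂, H₃` of order `2` (generated by `(1,0)`, `(0,1)`
and `(1,1)` respectively), every finite-dimensional complex representation
`(V, ρ)` of `G` satisfies `dim V + 2·dim V^G = dim V^{H₁} + dim V^{H₂} + dim V^{H₃}`. -/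
theorem klein_four_dimension_datum_relation
    (V : Type*) [AddCommGroup V] [Module ℂ V] [FiniteDimensional ℂ V]
    (ρ : Representation ℂ KleinFour V) :
    Module.finrank ℂ V +
        2 * Module.finrank ℂ
          (fixedSubmodule ρ ((⊤ : Subgroup KleinFour) : Set KleinFour)) =
      Module.finrank ℂ (fixedSubmodule ρ
          ((Subgroup.closure {Multiplicative.ofAdd ((1 : ZMod 2), (0 : ZMod 2))} :
            Subgroup KleinFour) : Set KleinFour)) +
      Module.finrank ℂ (fixedSubmodule ρ
          ((Subgroup.closure {Multiplicative.ofAdd ((0 : ZMod 2), (1 : ZMod 2))} :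
            Subgroup KleinFour) : Set KleinFour)) +
      Module.finrank ℂ (fixedSubmodule ρ
          ((Subgroup.closure {Multiplicative.ofAdd ((1 : ZMod 2), (1 : ZMod 2))} :
            Subgroup KleinFour) : Set KleinFour)) := by
  have h₁ := two_mul_finrank_fixed_involution ρ
    (Multiplicative.ofAdd ((1 : ZMod 2), (0 : ZMod 2))) (by decide)
  have h₂ := two_mul_finrank_fixed_involution ρ
    (Multiplicative.ofAdd ((0 : ZMod 2), (1 : ZMod 2))) (by decide)
  have h₃ := two_mul_finrank_fixed_involution ρ
    (Multiplicative.ofAdd ((1 : ZMod 2), (1 : ZMod 2))) (by decide)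
  have h₄ := four_mul_finrank_fixed_top ρ
  rw [← Nat.cast_inj (R := ℂ)]
  push_cast
  linear_combination (1 / 2 : ℂ) * (h₄ - h₁ - h₂ - h₃)
end
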